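/- arXiv:2409.16906 — 2 statements merged into one kernel-verified Lean document; each statement's English description precedes it below -/
import Mathlib

section
/- Let A_ρ ⊆ M_n be a structural matrix algebra and g : ρ → ℂ* a transitive map such that the induced automorphism g* : A_ρ → A_ρ preserves the rank of every matrix in A_ρ. Then g is trivial, i.e., there exists s : {1,...,n} → ℂ* with g(i,j) = s(i)/s(j) for all (i,j) ∈ ρ. -/
open Matrix

lemma aux_rank_PQ {n p : ℕ} (i j : Fin p → Fin n) (hi : Function.Injective i)
    (hj : Function.Injective j) (M : Matrix (Fin p) (Fin p) ℂ) :
    ((Matrix.of fun x k => if x = i k then (1:ℂ) else 0) * M *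
      (Matrix.of fun k y => if y = j k then (1:ℂ) else 0) : Matrix (Fin n) (Fin n) ℂ).rank
      = M.rank := by
  set P : Matrix (Fin n) (Fin p) ℂ := Matrix.of fun x k => if x = i k then (1:ℂ) else 0 with hP
  set Q : Matrix (Fin p) (Fin n) ℂ := Matrix.of fun k y => if y = j k then (1:ℂ) else 0 with hQ
  have h1 : Pᵀ * P = 1 := by
    ext k l
    simp [hP, Matrix.mul_apply, Matrix.one_apply, hi.eq_iff, eq_comm]
  have h2 : Q * Qᵀ = 1 := by
    ext k l
    simp [hQ, Matrix.mul_apply, Matrix.one_apply, hj.eq_iff, eq_comm]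
  apply le_antisymm
  · exact (Matrix.rank_mul_le_left _ _).trans (Matrix.rank_mul_le_right _ _)
  · have : M = Pᵀ * (P * M * Q) * Qᵀ := by
      calc M = (Pᵀ * P) * M * (Q * Qᵀ) := by rw [h1, h2]; simp
        _ = _ := by simp only [Matrix.mul_assoc]
    conv_lhs => rw [this]
    exact (Matrix.rank_mul_le_left _ _).trans (Matrix.rank_mul_le_right _ _)

lemma aux_sub {n p : ℕ} (ρ : Fin n → Fin n → Prop) (g : Fin n → Fin n → ℂ)
    (hrank : ∀ X : Matrix (Fin n) (Fin n) ℂ, (∀ i j, X i j ≠ 0 → ρ i j) →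
      (Matrix.of fun i j => g i j * X i j).rank = X.rank)
    (i j : Fin p → Fin n) (hi : Function.Injective i)
    (hj : Function.Injective j) (M : Matrix (Fin p) (Fin p) ℂ)
    (hM : ∀ k l, M k l ≠ 0 → ρ (i k) (j l)) :
    (Matrix.of fun k l => g (i k) (j l) * M k l).rank = M.rank := by
  rw [← aux_rank_PQ i j hi hj M, ← aux_rank_PQ i j hi hj (Matrix.of _), ← hrank (_ * M * _)]
  · congr 1
    ext x y
    simp only [Matrix.mul_apply, Matrix.of_apply, Finset.mul_sum, Finset.sum_mul]
    refine Finset.sum_congr rfl fun l _ => Finset.sum_congr rfl fun k _ => ?_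
    by_cases h1 : x = i k <;> by_cases h2 : y = j l <;> simp [h1, h2]
  · intro x y h
    simp only [Matrix.mul_apply, Matrix.of_apply, Finset.sum_mul] at h
    obtain ⟨l, _, h⟩ := Finset.exists_ne_zero_of_sum_ne_zero h
    obtain ⟨k, _, h⟩ := Finset.exists_ne_zero_of_sum_ne_zero h
    by_cases h1 : x = i k <;> by_cases h2 : y = j l <;> simp [h1, h2] at h
    rw [h1, h2]; exact hM _ _ h

lemma aux_cycle {n m : ℕ} (hm : m ≠ 0) (ρ : Fin n → Fin n → Prop) (g : Fin n → Fin n → ℂ)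
    (hrank : ∀ X : Matrix (Fin n) (Fin n) ℂ, (∀ i j, X i j ≠ 0 → ρ i j) →
      (Matrix.of fun i j => g i j * X i j).rank = X.rank)
    (s t : Fin n → ℂ) (hs : ∀ i, s i ≠ 0) (ht : ∀ i, t i ≠ 0)
    (i j : Fin (m+1) → Fin n) (hi : Function.Injective i)
    (hj : Function.Injective j)
    (h1 : ∀ k, ρ (i k) (j k)) (h2 : ∀ k, ρ (i k) (j (k-1)))
    (g1 : ∀ k, g (i k) (j k) = s (i k) / t (j k))
    (g2 : ∀ k, k ≠ 0 → g (i k) (j (k-1)) = s (i k) / t (j (k-1))) :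
    g (i 0) (j (0-1)) = s (i 0) / t (j (0-1)) := by
  by_contra hne
  have hk1 : ∀ k : Fin (m+1), k ≠ k - 1 := by
    intro k h
    have h : (1 : Fin (m+1)) = 0 := by
      have := sub_eq_self.mp h.symm
      exact this
    have := congrArg Fin.val h
    rw [Fin.val_one', Fin.val_zero, Nat.mod_eq_of_lt (by omega)] at this
    omega
  set M : Matrix (Fin (m+1)) (Fin (m+1)) ℂ := Matrix.of fun k l =>
    ((if l = k then 1 else 0) - (if l = k - 1 then 1 else 0)) * (t (j l) / s (i k)) with hM
  have hr := aux_sub ρ g hrank i j hi hj M (by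
    intro k l h
    by_cases e1 : l = k
    · rw [e1]; exact h1 k
    by_cases e2 : l = k - 1
    · rw [e2]; exact h2 k
    simp [hM, e1, e2] at h)
  set N := (Matrix.of fun k l => g (i k) (j l) * M k l) with hN
  have hNv : ∀ v k, (N *ᵥ v) k = v k - g (i k) (j (k-1)) * (t (j (k-1)) / s (i k)) * v (k-1) := by
    intro v k
    have : ∀ l, N k l * v l = (if l = k then v k else 0) -
        (if l = k - 1 then g (i k) (j (k-1)) * (t (j (k-1)) / s (i k)) * v (k-1) else 0) := by
      intro l
      by_cases e1 : l = k
      · subst e1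
        have := hs (i l)
        have := ht (j l)
        simp [hN, hM, hk1 l, g1]
        field_simp
      by_cases e2 : l = k - 1
      · subst e2
        simp [hN, hM, (hk1 k).symm]
      simp [hN, hM, e1, e2]
    simp only [Matrix.mulVec, dotProduct, this, Finset.sum_sub_distrib]
    simp
  have hMv : M *ᵥ (fun l => 1 / t (j l)) = 0 := by
    funext k
    have : ∀ l, M k l * (1 / t (j l)) = (if l = k then 1 / s (i k) else 0) -
        (if l = k - 1 then 1 / s (i k) else 0) := by
      intro l
      have := hs (i k)
      have := ht (j l)
      simp only [hM, Matrix.of_apply]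
      split_ifs <;> field_simp <;> simp
    simp only [Matrix.mulVec, dotProduct, this, Finset.sum_sub_distrib]
    simp
  have hNu : N.det ≠ 0 := by
    intro h0
    obtain ⟨v, hv, hv0⟩ := Matrix.exists_mulVec_eq_zero_iff.mpr h0
    have hstep : ∀ k, k ≠ 0 → v k = v (k-1) := by
      intro k hk
      have := congrFun hv0 k
      rw [hNv, g2 k hk] at this
      have a := hs (i k)
      have b := ht (j (k-1))
      have e : s (i k) / t (j (k-1)) * (t (j (k-1)) / s (i k)) = 1 := by field_simp
      rw [e, one_mul] at this
      exact sub_eq_zero.mp this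
    have hconst : ∀ k, v k = v 0 := by
      intro k
      induction k using Fin.induction with
      | zero => rfl
      | succ k ih =>
        rw [hstep _ (Fin.succ_ne_zero k), ← ih]
        congr 1
        rw [sub_eq_iff_eq_add]; simp
    have h3 := congrFun hv0 0
    rw [hNv, hconst (0-1)] at h3
    have hv00 : v 0 ≠ 0 := fun h => hv (funext fun k => by rw [hconst, h]; rfl)
    apply hne
    have a := hs (i 0)
    have b := ht (j (0-1))
    have h4 : v 0 * (1 - g (i 0) (j (0-1)) * (t (j (0-1)) / s (i 0))) = 0 := by
      simp only [Pi.zero_apply] at h3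
      linear_combination h3
    have h5 := (mul_eq_zero.mp h4).resolve_left hv00
    rw [eq_div_iff b]
    field_simp at h5
    linear_combination -h5
  have hMd : M.det = 0 := Matrix.exists_mulVec_eq_zero_iff.mp ⟨_, fun h => by
    have := congrFun h 0
    simp [ht] at this, hMv⟩
  have hN1 : N.rank = m + 1 := by
    rw [Matrix.rank_of_isUnit N ((Matrix.isUnit_iff_isUnit_det N).mpr hNu.isUnit)]; simp
  have hM1 : LinearIndependent ℂ M.col := by
    rw [linearIndependent_iff_card_eq_finrank_span, Set.finrank, ← Matrix.rank_eq_finrank_span_cols, ← hr, hN1]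
    simp
  have := Matrix.linearIndependent_cols_iff_isUnit.mp hM1
  rw [Matrix.isUnit_iff_isUnit_det, hMd] at this
  simp at this

def auxG {n : ℕ} (E : Finset (Fin n × Fin n)) : SimpleGraph (Fin n ⊕ Fin n) where
  Adj x y := (∃ i j, (i, j) ∈ E ∧ x = Sum.inl i ∧ y = Sum.inr j) ∨
    (∃ i j, (i, j) ∈ E ∧ y = Sum.inl i ∧ x = Sum.inr j)
  symm := ⟨fun _ _ h => h.symm⟩
  loopless := ⟨by
    rintro x (⟨i, j, _, h1, h2⟩ | ⟨i, j, _, h1, h2⟩) <;> rw [h1] at h2 <;> cases h2⟩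

lemma aux_path {n : ℕ} (E : Finset (Fin n × Fin n)) (a b : Fin n)
    (h : (auxG E).Reachable (Sum.inl a) (Sum.inr b)) :
    ∃ (m : ℕ) (i j : Fin (m+1) → Fin n), Function.Injective i ∧ Function.Injective j ∧
      (∀ k, (i k, j k) ∈ E) ∧ (∀ k, k ≠ 0 → (i k, j (k-1)) ∈ E) ∧ i 0 = a ∧ j (0-1) = b := by
  obtain ⟨w, hw⟩ := h.exists_isPath
  have hadj : ∀ k, k < w.length → (auxG E).Adj (w.getVert k) (w.getVert (k+1)) :=
    fun k hk => w.adj_getVert_succ hk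
  have hpar : ∀ k, k ≤ w.length → (k % 2 = 0 → ∃ x, w.getVert k = Sum.inl x) ∧
      (k % 2 = 1 → ∃ x, w.getVert k = Sum.inr x) := by
    intro k
    induction k with
    | zero => intro _; simp
    | succ k ih =>
      intro hk
      have ih := ih (by omega)
      constructor
      · intro h
        obtain ⟨x, hx⟩ := ih.2 (by omega)
        rcases hadj k (by omega) with ⟨i, j, _, h1, h2⟩ | ⟨i, j, _, h1, h2⟩
        · rw [hx] at h1; cases h1
        · exact ⟨_, h1⟩
      · intro h
        obtain ⟨x, hx⟩ := ih.1 (by omega)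
        rcases hadj k (by omega) with ⟨i, j, _, h1, h2⟩ | ⟨i, j, _, h1, h2⟩
        · exact ⟨_, h2⟩
        · rw [hx] at h2; cases h2
  have hodd : w.length % 2 = 1 := by
    by_contra hc
    obtain ⟨x, hx⟩ := (hpar _ le_rfl).1 (by omega)
    rw [w.getVert_length] at hx
    cases hx
  obtain ⟨m, hm⟩ : ∃ m, w.length = 2 * m + 1 := ⟨w.length / 2, by omega⟩
  have hI : ∀ k : Fin (m+1), ∃ x, w.getVert (2 * k.val) = Sum.inl x :=
    fun k => (hpar _ (by omega)).1 (by omega)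
  have hJ : ∀ k : Fin (m+1), ∃ x, w.getVert (2 * k.val + 1) = Sum.inr x :=
    fun k => (hpar _ (by omega)).2 (by omega)
  choose i hi using hI
  choose j hj using hJ
  have hinj := hw.getVert_injOn
  refine ⟨m, i, j, ?_, ?_, ?_, ?_, ?_, ?_⟩
  · intro k l h
    have := hinj (x₁ := 2 * k.val) (x₂ := 2 * l.val) (by simp; omega) (by simp; omega)
      (by rw [hi, hi, h])
    ext; omega
  · intro k l h
    have := hinj (x₁ := 2 * k.val + 1) (x₂ := 2 * l.val + 1) (by simp; omega) (by simp; omega)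
      (by rw [hj, hj, h])
    ext; omega
  · intro k
    have := hadj (2 * k.val) (by omega)
    rw [hi, hj] at this
    rcases this with ⟨x, y, h, h1, h2⟩ | ⟨x, y, h, h1, h2⟩
    · cases h1; cases h2; exact h
    · cases h1
  · intro k hk
    obtain ⟨l, rfl⟩ := Fin.exists_succ_eq.mpr hk
    have e : l.succ - 1 = l.castSucc := by
      rw [sub_eq_iff_eq_add]; simp
    rw [e]
    have := hadj (2 * l.val + 1) (by omega)
    have h1 := hi l.succ
    have h2 := hj l.castSucc
    rw [Fin.val_succ] at h1
    rw [Fin.val_castSucc] at h2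
    rw [show 2 * l.val + 1 + 1 = 2 * (l.val + 1) by ring, h1, h2] at this
    rcases this with ⟨x, y, h, h1, h2⟩ | ⟨x, y, h, h1, h2⟩
    · cases h1
    · cases h1; cases h2; exact h
  · have := hi 0
    simp at this
    exact this.symm
  · have h1 := hj (Fin.last m)
    have e : (0 - 1 : Fin (m+1)) = Fin.last m := by
      rw [sub_eq_iff_eq_add]; simp
    rw [e]
    rw [Fin.val_last, ← hm, w.getVert_length] at h1
    cases h1; rfl

lemma aux_main {n : ℕ} (ρ : Fin n → Fin n → Prop) (g : Fin n → Fin n → ℂ)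
    (hg0 : ∀ i j, ρ i j → g i j ≠ 0)
    (hrank : ∀ X : Matrix (Fin n) (Fin n) ℂ, (∀ i j, X i j ≠ 0 → ρ i j) →
      (Matrix.of fun i j => g i j * X i j).rank = X.rank)
    (E : Finset (Fin n × Fin n)) : (∀ i j, (i, j) ∈ E → ρ i j) →
    ∃ s t : Fin n → ℂ, (∀ i, s i ≠ 0) ∧ (∀ i, t i ≠ 0) ∧
      ∀ i j, (i, j) ∈ E → g i j = s i / t j := by
  classical
  induction E using Finset.induction_on with
  | empty => intro _; exact ⟨fun _ => 1, fun _ => 1, by simp, by simp, by simp⟩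
  | insert e E he ih =>
    intro hE
    obtain ⟨a, b⟩ := e
    obtain ⟨s, t, hs, ht, hst⟩ := ih fun i j h => hE i j (Finset.mem_insert_of_mem h)
    have hab : ρ a b := hE a b (Finset.mem_insert_self _ _)
    by_cases hR : (auxG E).Reachable (Sum.inl a) (Sum.inr b)
    · refine ⟨s, t, hs, ht, ?_⟩
      intro x y hxy
      rcases Finset.mem_insert.mp hxy with h | h
      · cases h
        obtain ⟨m, i, j, hi, hj, h1, h2, h3, h4⟩ := aux_path E a b hR
        have hm : m ≠ 0 := by
          rintro rfl
          apply he
          have := h1 0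
          rw [h3] at this
          rw [← h4]
          have e : (0 - 1 : Fin (0+1)) = 0 := by decide
          rwa [e]
        have := aux_cycle hm ρ g hrank s t hs ht i j hi hj
          (fun k => hE _ _ (Finset.mem_insert_of_mem (h1 k)))
          (fun k => by
            by_cases hk : k = 0
            · rw [hk, h3, h4]; exact hab
            · exact hE _ _ (Finset.mem_insert_of_mem (h2 k hk)))
          (fun k => hst _ _ (h1 k)) (fun k hk => hst _ _ (h2 k hk))
        rwa [h3, h4] at this
      · exact hst _ _ h
    · set c := g a b * t b / s a with hc
      have hc0 : c ≠ 0 := div_ne_zero (mul_ne_zero (hg0 _ _ hab) (ht b)) (hs a)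
      refine ⟨fun i => s i * if (auxG E).Reachable (Sum.inl a) (Sum.inl i) then c else 1,
        fun i => t i * if (auxG E).Reachable (Sum.inl a) (Sum.inr i) then c else 1, ?_, ?_, ?_⟩
      · intro i; dsimp only; split_ifs <;> simp [hs, hc0]
      · intro i; dsimp only; split_ifs <;> simp [ht, hc0]
      · intro x y hxy
        rcases Finset.mem_insert.mp hxy with h | h
        · cases h
          have a1 := hs a
          have a2 := ht b
          simp only [SimpleGraph.Reachable.refl, if_true, hR, if_false, hc]
          field_simp
        · have hA : (auxG E).Adj (Sum.inl x) (Sum.inr y) := Or.inl ⟨x, y, h, rfl, rfl⟩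
          have : (auxG E).Reachable (Sum.inl a) (Sum.inl x) ↔
              (auxG E).Reachable (Sum.inl a) (Sum.inr y) :=
            ⟨fun h => h.trans hA.reachable, fun h => h.trans hA.symm.reachable⟩
          have a2 := ht y
          simp only [this, hst x y h]
          split_ifs <;> field_simp

theorem stmt_17 {n : ℕ} (ρ : Fin n → Fin n → Prop)
    (hρrefl : ∀ i, ρ i i) (hρtrans : ∀ i j k, ρ i j → ρ j k → ρ i k)
    (Aρ : Set (Matrix (Fin n) (Fin n) ℂ))
    (hAρ : Aρ = {X | ∀ i j, X i j ≠ 0 → ρ i j})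
    (g : Fin n → Fin n → ℂ)
    (hg0 : ∀ i j, ρ i j → g i j ≠ 0)
    (hgtrans : ∀ i j k, ρ i j → ρ j k → g i j * g j k = g i k)
    (hrank : ∀ X ∈ Aρ, (Matrix.of fun i j => g i j * X i j).rank = X.rank) :
    ∃ s : Fin n → ℂ, (∀ i, s i ≠ 0) ∧ ∀ i j, ρ i j → g i j = s i / s j := by
  classical
  subst hAρ
  obtain ⟨s, t, hs, ht, h⟩ := aux_main ρ g hg0 (fun X hX => hrank X hX)
    (Finset.univ.filter fun e => ρ e.1 e.2) (by simp)
  have h' : ∀ i j, ρ i j → g i j = s i / t j := fun i j hij => h i j (by simpa using hij)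
  have hst : ∀ i, s i = t i := by
    intro i
    have h1 := hgtrans i i i (hρrefl i) (hρrefl i)
    have h2 : g i i = 1 := mul_left_cancel₀ (hg0 i i (hρrefl i)) (by rw [h1, mul_one])
    rw [h' i i (hρrefl i)] at h2
    exact (div_eq_one_iff_eq (ht i)).mp h2
  exact ⟨s, hs, fun i j hij => by rw [h' i j hij, hst j]⟩
end

section
/- Let A_ρ ⊆ M_n be a structural matrix algebra. A linear unital map φ : A_ρ → M_n preserves the rank of every matrix in A_ρ if and only if there exist an invertible matrix T ∈ M_n and a central idempotent P ∈ Z(A_ρ) such that φ(X) = T(PX + (I−P)X^t)T^{-1} for all X ∈ A_ρ. -/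
open Matrix

theorem aux_rank_one {n : ℕ} (M : Matrix (Fin n) (Fin n) ℂ) (h : M.rank ≤ 1) :
    ∃ u v : Fin n → ℂ, M = vecMulVec u v := by
  unfold Matrix.rank at h
  obtain ⟨w, hw⟩ := finrank_le_one_iff.1 h
  choose c hc using fun j : Fin n => hw ⟨M.mulVecLin (Pi.single j 1), LinearMap.mem_range_self _ _⟩
  refine ⟨w, c, ?_⟩
  ext i j
  have := congrFun (congrArg Subtype.val (hc j)) i
  simp at this
  simp [vecMulVec, ← this, mul_comm]

theorem aux_minor {n : ℕ} (M : Matrix (Fin n) (Fin n) ℂ) (h : M.rank ≤ 1) (a b c d : Fin n) :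
    M a b * M c d = M a d * M c b := by
  obtain ⟨u, v, rfl⟩ := aux_rank_one M h
  simp only [vecMulVec_apply]; ring

theorem aux_gap {n : ℕ} (X : Matrix (Fin n) (Fin n) ℂ) (h1 : ∀ i, ∑ j, X i j = 0)
    (h2 : ∀ j, ∑ i, X i j = 0) (a b : Fin n) (t : ℂ) (ht : t ≠ 0) :
    X.rank < (X + single a b t).rank := by
  have key : ∀ v : Fin n → ℂ, single a b t *ᵥ v = Pi.single a (t * v b) := by
    intro v; ext i
    rcases eq_or_ne a i with rfl | h
    · simp [mulVec, dotProduct, single_apply]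
    · simp [mulVec, dotProduct, h, h.symm]
  have hlt : LinearMap.ker (X + single a b t).mulVecLin < LinearMap.ker X.mulVecLin := by
    refine lt_of_le_of_ne ?_ ?_
    · intro v hv
      simp only [LinearMap.mem_ker, mulVecLin_apply, add_mulVec, key] at hv ⊢
      have hs : ∑ i, (X *ᵥ v + Pi.single a (t * v b) : Fin n → ℂ) i = 0 := by rw [hv]; simp
      have : ∑ i, (X *ᵥ v) i = 0 := by
        simp only [mulVec, dotProduct]
        rw [Finset.sum_comm]
        simp [← Finset.sum_mul, h2]
      simp only [Pi.add_apply, Finset.sum_add_distrib, this, zero_add] at hs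
      simp at hs
      rcases hs with hs | hs
      · exact absurd hs ht
      · simpa [hs] using hv
    · intro he
      have h0 : (fun _ => 1 : Fin n → ℂ) ∈ LinearMap.ker X.mulVecLin := by
        simp only [LinearMap.mem_ker, mulVecLin_apply]
        ext i; simp [mulVec, dotProduct, h1]
      have h3 := h0
      rw [← he] at h3
      simp only [LinearMap.mem_ker, mulVecLin_apply, add_mulVec, key] at h0 h3
      rw [h0] at h3
      have := congrFun h3 a
      simp at this
      exact ht this
  have := Submodule.finrank_lt_finrank_of_lt hlt
  have e1 := LinearMap.finrank_range_add_finrank_ker X.mulVecLin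
  have e2 := LinearMap.finrank_range_add_finrank_ker (X + single a b t).mulVecLin
  unfold Matrix.rank
  omega

theorem aux_rank_add {n : ℕ} (M P A B : Matrix (Fin n) (Fin n) ℂ) (hA : M * P = A)
    (hB : M * (1 - P) = B) (h1 : P * A = A) (h2 : P * B = 0) : M.rank = A.rank + B.rank := by
  have hM : M = A + B := by rw [← hA, ← hB]; noncomm_ring
  unfold Matrix.rank
  rw [← Submodule.finrank_sup_add_finrank_inf_eq]
  have hinf : LinearMap.range A.mulVecLin ⊓ LinearMap.range B.mulVecLin = ⊥ := by
    rw [eq_bot_iff]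
    rintro _ ⟨⟨v, rfl⟩, ⟨w, hw⟩⟩
    simp only [mulVecLin_apply] at hw
    have : P *ᵥ (A *ᵥ v) = P *ᵥ (B *ᵥ w) := by rw [hw]
    rw [mulVec_mulVec, mulVec_mulVec, h1, h2] at this
    simp [this]
  have hsup : LinearMap.range A.mulVecLin ⊔ LinearMap.range B.mulVecLin
      = LinearMap.range M.mulVecLin := by
    apply le_antisymm
    · refine sup_le ?_ ?_
      · rintro _ ⟨v, rfl⟩
        exact ⟨P *ᵥ v, by simp [mulVec_mulVec, hA]⟩
      · rintro _ ⟨v, rfl⟩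
        exact ⟨(1 - P) *ᵥ v, by rw [mulVecLin_apply, mulVec_mulVec, hB]; rfl⟩
    · rintro _ ⟨v, rfl⟩
      rw [hM, mulVecLin_add]
      exact Submodule.add_mem_sup ⟨v, rfl⟩ ⟨v, rfl⟩
  rw [hinf, hsup]; simp

/-- partial transposition preserves rank -/
theorem aux_ptrans {n : ℕ} (p : Fin n → ℂ) (hp : ∀ i, p i * p i = p i)
    (X : Matrix (Fin n) (Fin n) ℂ) (hc : Commute (diagonal p) X) :
    (diagonal p * X + (1 - diagonal p) * Xᵀ).rank = X.rank := by
  set P := diagonal p with hP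
  have hPP : P * P = P := by rw [hP, diagonal_mul_diagonal]; congr 1; ext i; exact hp i
  have hPt : Pᵀ = P := diagonal_transpose _
  have hc1 : P * X = X * P := hc
  have hc2 : P * Xᵀ = Xᵀ * P := by
    have := congrArg transpose hc1
    rw [transpose_mul, transpose_mul, hPt] at this
    exact this.symm
  have hQQ : (1 - P) * (1 - P) = 1 - P := by
    rw [sub_mul, mul_sub, mul_sub, hPP]; simp
  have hPQ : P * (1 - P) = 0 := by rw [mul_sub, hPP]; simp
  have hQP : (1 - P) * P = 0 := by rw [sub_mul, hPP]; simp
  have hd2 : (1 - P) * Xᵀ = Xᵀ * (1 - P) := by rw [sub_mul, mul_sub, hc2]; simp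
  have hd1 : (1 - P) * X = X * (1 - P) := by rw [sub_mul, mul_sub, hc1]; simp
  have e1 := aux_rank_add (P * X + (1 - P) * Xᵀ) P (P * X) ((1 - P) * Xᵀ)
    (by rw [add_mul, mul_assoc, mul_assoc, ← hc1, ← hc2, ← mul_assoc, ← mul_assoc, hPP, hQP]; simp)
    (by rw [add_mul, mul_assoc, mul_assoc, ← hd1, ← hd2, ← mul_assoc, ← mul_assoc, hQQ, hPQ]; simp)
    (by rw [← mul_assoc, hPP]) (by rw [← mul_assoc, hPQ]; simp)
  have e2 := aux_rank_add X P (P * X) ((1 - P) * X) hc1.symm hd1.symm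
    (by rw [← mul_assoc, hPP]) (by rw [← mul_assoc, hPQ]; simp)
  have e3 : ((1 - P) * Xᵀ).rank = ((1 - P) * X).rank := by
    rw [← rank_transpose ((1 - P) * X), transpose_mul, transpose_sub, hPt, hd2]; simp
  rw [e1, e2, e3]

/-- duality -/
theorem aux_dual {n : ℕ} (S : Finset (Fin n × Fin n)) (e : Fin n × Fin n) (he : e ∈ S) :
    (∃ r s : Fin n → ℂ, ∀ x ∈ S, r x.1 + s x.2 = if x = e then 1 else 0) ∨
    ∃ X : Matrix (Fin n) (Fin n) ℂ, (∀ i j, X i j ≠ 0 → (i, j) ∈ S) ∧ (∀ i, ∑ j, X i j = 0) ∧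
      (∀ j, ∑ i, X i j = 0) ∧ X e.1 e.2 = 1 := by
  classical
  let L : Fin n ⊕ Fin n → (Fin n × Fin n → ℂ) →ₗ[ℂ] ℂ := Sum.elim
    (fun i => ∑ j, if (i, j) ∈ S then LinearMap.proj (i, j) else 0)
    (fun j => ∑ i, if (i, j) ∈ S then LinearMap.proj (i, j) else 0)
  let K : (Fin n × Fin n → ℂ) →ₗ[ℂ] ℂ := LinearMap.proj e
  by_cases h : ⨅ i, LinearMap.ker (L i) ≤ LinearMap.ker K
  · left
    have := mem_span_of_iInf_ker_le_ker h
    obtain ⟨c, hc⟩ := (Submodule.mem_span_range_iff_exists_fun ℂ).1 this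
    refine ⟨fun i => c (Sum.inl i), fun j => c (Sum.inr j), ?_⟩
    rintro ⟨i, j⟩ hx
    have := LinearMap.congr_fun hc (Pi.single (i, j) 1)
    have h1 : ∀ k, L (Sum.inl k) (Pi.single (i, j) 1) = if k = i then 1 else 0 := by
      intro k
      simp only [L, Sum.elim_inl, LinearMap.sum_apply]
      rw [Finset.sum_eq_single j]
      · by_cases hk : k = i
        · subst hk; simp [hx]
        · split_ifs <;> simp [hk]
      · intro b _ hb; split_ifs <;> simp [hb]
      · simp
    have h2 : ∀ k, L (Sum.inr k) (Pi.single (i, j) 1) = if k = j then 1 else 0 := by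
      intro k
      simp only [L, Sum.elim_inr, LinearMap.sum_apply]
      rw [Finset.sum_eq_single i]
      · by_cases hk : k = j
        · subst hk; simp [hx]
        · split_ifs <;> simp [hk]
      · intro b _ hb; split_ifs <;> simp [hb]
      · simp
    simp only [Fintype.sum_sum_type, LinearMap.add_apply, LinearMap.sum_apply, LinearMap.smul_apply,
      h1, h2, K, LinearMap.proj_apply] at this
    simpa [Pi.single_apply, eq_comm] using this
  · right
    rw [SetLike.not_le_iff_exists] at h
    obtain ⟨x, hx, hk⟩ := h
    simp only [Submodule.mem_iInf, LinearMap.mem_ker] at hx hk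
    have hk' : x e ≠ 0 := hk
    refine ⟨fun i j => if (i, j) ∈ S then x (i, j) / x e else 0, ?_, ?_, ?_, ?_⟩
    · intro i j hij; by_contra hh; simp [hh] at hij
    · intro i
      have := hx (Sum.inl i)
      simp only [L, Sum.elim_inl, LinearMap.sum_apply] at this
      have e2 : ∀ j, (if (i, j) ∈ S then x (i, j) / x e else 0) =
        ((if (i, j) ∈ S then LinearMap.proj (i, j) else 0 : (Fin n × Fin n → ℂ) →ₗ[ℂ] ℂ) x) / x e := by
        intro j; split_ifs <;> simp
      simp_rw [e2, ← Finset.sum_div, this]; simp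
    · intro i
      have := hx (Sum.inr i)
      simp only [L, Sum.elim_inr, LinearMap.sum_apply] at this
      have e2 : ∀ j, (if (j, i) ∈ S then x (j, i) / x e else 0) =
        ((if (j, i) ∈ S then LinearMap.proj (j, i) else 0 : (Fin n × Fin n → ℂ) →ₗ[ℂ] ℂ) x) / x e := by
        intro j; split_ifs <;> simp
      simp_rw [e2, ← Finset.sum_div, this]; simp
    · simp [he, hk']

theorem aux_cocycle {n : ℕ} (c : Fin n → Fin n → ℂ) (S : Finset (Fin n × Fin n))
    (hc : ∀ x ∈ S, c x.1 x.2 ≠ 0)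
    (hr : ∀ X : Matrix (Fin n) (Fin n) ℂ, (∀ i j, X i j ≠ 0 → (i, j) ∈ S) →
      (Matrix.of fun i j => c i j * X i j).rank = X.rank) :
    ∃ r s : Fin n → ℂ, (∀ i, r i ≠ 0) ∧ (∀ i, s i ≠ 0) ∧ ∀ x ∈ S, c x.1 x.2 = r x.1 * s x.2 := by
  classical
  induction S using Finset.induction_on with
  | empty => exact ⟨fun _ => 1, fun _ => 1, by simp, by simp, by simp⟩
  | insert e S heS ih =>
    obtain ⟨r, s, hr0, hs0, hrs⟩ := ih (fun x hx => hc x (Finset.mem_insert_of_mem hx))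
      (fun X hX => hr X fun i j h => Finset.mem_insert_of_mem (hX i j h))
    set d := c e.1 e.2 / (r e.1 * s e.2) with hd
    have hd0 : d ≠ 0 := div_ne_zero (hc e (Finset.mem_insert_self _ _)) (mul_ne_zero (hr0 _) (hs0 _))
    have hce : c e.1 e.2 = d * (r e.1 * s e.2) := by
      rw [hd, div_mul_cancel₀]; exact (mul_ne_zero (hr0 _) (hs0 _))
    rcases aux_dual (insert e S) e (Finset.mem_insert_self _ _) with ⟨a, b, hab⟩ | ⟨X, hX, h1, h2, h3⟩
    · refine ⟨fun i => r i * Complex.exp (Complex.log d * a i),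
        fun i => s i * Complex.exp (Complex.log d * b i),
        fun i => mul_ne_zero (hr0 i) (Complex.exp_ne_zero _),
        fun i => mul_ne_zero (hs0 i) (Complex.exp_ne_zero _), ?_⟩
      intro x hx
      have e1 : r x.1 * Complex.exp (Complex.log d * a x.1) *
          (s x.2 * Complex.exp (Complex.log d * b x.2)) =
          r x.1 * s x.2 * Complex.exp (Complex.log d * (a x.1 + b x.2)) := by
        rw [mul_add, Complex.exp_add]; ring
      simp only [e1, hab x hx]
      by_cases hxe : x = e
      · subst hxe; simp [Complex.exp_log hd0, hce]; ring
      · simp [hxe]; exact hrs x ((Finset.mem_insert.1 hx).resolve_left hxe)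
    · refine ⟨r, s, hr0, hs0, ?_⟩
      have hd1 : d = 1 := by
        by_contra hne
        have hgap := aux_gap X h1 h2 e.1 e.2 (d - 1) (sub_ne_zero.2 hne)
        have hh := hr X hX
        have e2 : (Matrix.of fun i j => c i j * X i j) =
            diagonal r * (X + single e.1 e.2 (d - 1)) * diagonal s := by
          ext i j
          rw [mul_diagonal, diagonal_mul]
          simp only [of_apply, Matrix.add_apply]
          by_cases hij : (i, j) = e
          · subst hij; simp at h3 ⊢; simp [h3]; simp at hce; rw [hce]; ring
          · have : ¬ (e.1 = i ∧ e.2 = j) := by rintro ⟨rfl, rfl⟩; exact hij rfl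
            rw [single_apply, if_neg this]
            by_cases hz : X i j = 0
            · simp [hz]
            · have := hrs _ ((Finset.mem_insert.1 (hX i j hz)).resolve_left hij)
              simp only at this
              rw [this]; ring
        rw [e2, rank_mul_eq_left_of_isUnit_det, rank_mul_eq_right_of_isUnit_det] at hh
        · omega
        · simp [Finset.prod_ne_zero_iff, hr0]
        · simp [Finset.prod_ne_zero_iff, hs0]
      intro x hx
      rcases Finset.mem_insert.1 hx with rfl | hx
      · rw [hce, hd1, one_mul]
      · exact hrs x hx

theorem aux_norm {n : ℕ} (ρ : Fin n → Fin n → Prop)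
    (hρrefl : ∀ i, ρ i i) (hρtrans : ∀ i j k, ρ i j → ρ j k → ρ i k)
    (ψ : Matrix (Fin n) (Fin n) ℂ →ₗ[ℂ] Matrix (Fin n) (Fin n) ℂ)
    (hd : ∀ i, ψ (single i i 1) = single i i 1)
    (hr : ∀ X : Matrix (Fin n) (Fin n) ℂ, (∀ i j, X i j ≠ 0 → ρ i j) → (ψ X).rank = X.rank) :
    ∃ (f : Fin n → Prop) (c : Fin n → Fin n → ℂ), (∀ i j, ρ i j → (f i ↔ f j)) ∧
      (∀ i, c i i = 1) ∧ (∀ i j, ρ i j → c i j ≠ 0) ∧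
      ∀ i j, ρ i j → (¬ f i → ψ (single i j 1) = single i j (c i j)) ∧
        (f i → ψ (single i j 1) = single j i (c i j)) := by
  classical
  have hmin : ∀ (X : Matrix (Fin n) (Fin n) ℂ) (u v : Fin n → ℂ), X = vecMulVec u v →
      (∀ i j, X i j ≠ 0 → ρ i j) → ∀ a b p q, ψ X a b * ψ X p q = ψ X a q * ψ X p b := by
    intro X u v hX hA
    apply aux_minor
    rw [hr X hA, hX]
    exact rank_vecMulVec_le _ _
  set g : Fin n → Fin n → Matrix (Fin n) (Fin n) ℂ := fun i j => ψ (single i j 1) with hg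
  have hsum2 : ∀ i j k l a b p q (t : ℂ), ρ i j → ρ k l → (i = k ∨ j = l) →
      (g i j a b + t * g k l a b) * (g i j p q + t * g k l p q) =
      (g i j a q + t * g k l a q) * (g i j p b + t * g k l p b) := by
    intro i j k l a b p q t h1 h2 h3
    have hA : ∀ x y, (single i j 1 + t • single k l 1 : Matrix (Fin n) (Fin n) ℂ) x y ≠ 0 →
        ρ x y := by
      intro x y hxy
      by_contra hn
      apply hxy
      have e1 : ¬ (i = x ∧ j = y) := by rintro ⟨rfl, rfl⟩; exact hn h1
      have e2 : ¬ (k = x ∧ l = y) := by rintro ⟨rfl, rfl⟩; exact hn h2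
      simp only [Matrix.add_apply, Matrix.smul_apply, single_apply, if_neg e1, if_neg e2]
      simp
    rcases h3 with rfl | rfl
    · have := hmin (single i j 1 + t • single i l 1) (Pi.single i 1) (Pi.single j 1 + t • Pi.single l 1)
        (by ext x y; simp [vecMulVec, single_apply, Pi.single_apply, eq_comm]; grind) hA a b p q
      simp only [map_add, map_smul, Matrix.add_apply, Matrix.smul_apply, smul_eq_mul] at this
      exact this
    · have := hmin (single i j 1 + t • single k j 1) (Pi.single i 1 + t • Pi.single k 1) (Pi.single j 1)
        (by ext x y; simp [vecMulVec, single_apply, Pi.single_apply, eq_comm]; grind) hA a b p q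
      simp only [map_add, map_smul, Matrix.add_apply, Matrix.smul_apply, smul_eq_mul] at this
      exact this
  have hgd : ∀ i a b, g i i a b = if i = a ∧ i = b then 1 else 0 := by
    intro i a b; simp only [hg, hd]; rw [single_apply]
  have hsupp : ∀ i j, ρ i j → i ≠ j → ∀ a b, ¬ (a = i ∧ b = j) → ¬ (a = j ∧ b = i) →
      g i j a b = 0 := by
    intro i j hij hne a b hab1 hab2
    have k1 : a ≠ i → b ≠ i → g i j a b = 0 := by
      intro ha hb
      have t0 := hsum2 i j i i i i a b 0 hij (hρrefl i) (Or.inl rfl)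
      have t1 := hsum2 i j i i i i a b 1 hij (hρrefl i) (Or.inl rfl)
      simp only [hgd] at t0 t1
      simp [ha.symm, hb.symm] at t0 t1
      linear_combination t1 - t0
    have k2 : a ≠ j → b ≠ j → g i j a b = 0 := by
      intro ha hb
      have t0 := hsum2 i j j j j j a b 0 hij (hρrefl j) (Or.inr rfl)
      have t1 := hsum2 i j j j j j a b 1 hij (hρrefl j) (Or.inr rfl)
      simp only [hgd] at t0 t1
      simp [ha.symm, hb.symm] at t0 t1
      linear_combination t1 - t0
    grind
  have hprod : ∀ i j, ρ i j → i ≠ j → g i j i j * g i j j i = 0 := by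
    intro i j hij hne
    have t0 := hsum2 i j i i i j j i 0 hij (hρrefl i) (Or.inl rfl)
    simp only [zero_mul, add_zero] at t0
    rw [t0, hsupp i j hij hne i i (by grind) (by grind)]; simp
  have hnz : ∀ i j, ρ i j → i ≠ j → g i j i j ≠ 0 ∨ g i j j i ≠ 0 := by
    intro i j hij hne
    by_contra hcon
    push Not at hcon
    have hz : g i j = 0 := by
      ext a b
      by_cases h1 : a = i ∧ b = j
      · rw [h1.1, h1.2, hcon.1]; rfl
      by_cases h2 : a = j ∧ b = i
      · rw [h2.1, h2.2, hcon.2]; rfl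
      rw [hsupp i j hij hne a b h1 h2]; rfl
    have hrk := hr (single i j 1) (by
      intro x y hxy
      by_contra hn
      apply hxy
      rw [single_apply, if_neg]; rintro ⟨rfl, rfl⟩; exact hn hij)
    change (g i j).rank = _ at hrk
    rw [hz, rank_zero] at hrk
    have : (single i j 1 : Matrix (Fin n) (Fin n) ℂ) = 0 := by
      unfold Matrix.rank at hrk
      have := (Submodule.finrank_eq_zero (R := ℂ)).1 hrk.symm
      rw [LinearMap.range_eq_bot] at this
      ext x y
      have := congrFun (LinearMap.congr_fun this (Pi.single y 1)) x
      simpa using this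
    have := congrFun (congrFun this i) j
    simp at this
  have hrow : ∀ i j k, ρ i j → ρ i k → i ≠ j → i ≠ k → g i j j i ≠ 0 → g i k k i ≠ 0 := by
    intro i j k hij hik h1 h2 hτ hcon
    have hk := (hnz i k hik h2).resolve_right (by simpa using hcon)
    rcases eq_or_ne j k with rfl | hjk
    · exact hτ hcon
    have t := hsum2 i j i k i k j i 1 hij hik (Or.inl rfl)
    rw [hsupp i j hij h1 i k (by grind) (by grind), hsupp i j hij h1 i i (by grind) (by grind),
      hsupp i k hik h2 i i (by grind) (by grind), hsupp i k hik h2 j i (by grind) (by grind)] at t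
    simp at t
    tauto
  have hcol : ∀ i j k, ρ j i → ρ k i → j ≠ i → k ≠ i → g j i i j ≠ 0 → g k i i k ≠ 0 := by
    intro i j k hij hik h1 h2 hτ hcon
    have hk := (hnz k i hik h2).resolve_right (by simpa using hcon)
    rcases eq_or_ne j k with rfl | hjk
    · exact hτ hcon
    have t := hsum2 j i k i k i i j 1 hij hik (Or.inr rfl)
    rw [hsupp j i hij h1 k i (by grind) (by grind), hsupp j i hij h1 i i (by grind) (by grind),
      hsupp k i hik h2 i i (by grind) (by grind), hsupp k i hik h2 i j (by grind) (by grind)] at t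
    simp at t
    tauto
  have hsym : ∀ i j, ρ i j → ρ j i → i ≠ j → g i j j i ≠ 0 → g j i i j ≠ 0 := by
    intro i j hij hji hne hτ hcon
    have hA : ∀ x y, (single i i 1 + single j j 1 + single i j 1 + single j i 1 :
        Matrix (Fin n) (Fin n) ℂ) x y ≠ 0 → ρ x y := by
      intro x y hxy
      by_contra hn
      apply hxy
      have e1 : ¬ (i = x ∧ j = y) := by rintro ⟨rfl, rfl⟩; exact hn hij
      have e2 : ¬ (j = x ∧ i = y) := by rintro ⟨rfl, rfl⟩; exact hn hji
      have e3 : ¬ (i = x ∧ i = y) := by rintro ⟨rfl, rfl⟩; exact hn (hρrefl _)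
      have e4 : ¬ (j = x ∧ j = y) := by rintro ⟨rfl, rfl⟩; exact hn (hρrefl _)
      simp only [Matrix.add_apply, single_apply, if_neg e1, if_neg e2, if_neg e3, if_neg e4]
      simp
    have t := hmin _ (Pi.single i 1 + Pi.single j 1) (Pi.single i 1 + Pi.single j 1)
      (by ext x y; simp [vecMulVec, single_apply, Pi.single_apply, eq_comm]; grind) hA i i j j
    have hm : ∀ a b, ψ (single i i 1 + single j j 1 + single i j 1 + single j i 1) a b =
        g i i a b + g j j a b + g i j a b + g j i a b := by
      intro a b; simp [g, map_add]
    simp only [hm, hgd] at t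
    have hz : g i j i j = 0 := (mul_eq_zero.1 (hprod i j hij hne)).resolve_right hτ
    rw [hsupp i j hij hne i i (by grind) (by grind), hsupp i j hij hne j j (by grind) (by grind),
      hsupp j i hji hne.symm i i (by grind) (by grind),
      hsupp j i hji hne.symm j j (by grind) (by grind), hz, hcon] at t
    simp [hne, hne.symm] at t
  have hch1 : ∀ i j k, ρ i j → ρ j k → i ≠ j → j ≠ k → g i j j i ≠ 0 → g j k k j ≠ 0 := by
    intro i j k hij hjk h1 h2 hτ
    rcases eq_or_ne i k with rfl | hik
    · exact hsym i j hij hjk h1 hτ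
    · have hρ := hρtrans i j k hij hjk
      exact hcol k i j hρ hjk hik h2 (hrow i j k hij hρ h1 hik hτ)
  have hch2 : ∀ i j k, ρ i j → ρ j k → i ≠ j → j ≠ k → g j k k j ≠ 0 → g i j j i ≠ 0 := by
    intro i j k hij hjk h1 h2 hτ
    rcases eq_or_ne i k with rfl | hik
    · exact hsym j i hjk hij h1.symm hτ
    · have hρ := hρtrans i j k hij hjk
      exact hrow i k j hρ hij hik h1 (hcol k j i hjk hρ h2 hik hτ)
  let f : Fin n → Prop := fun i => ∃ j, i ≠ j ∧ ((ρ i j ∧ g i j j i ≠ 0) ∨ (ρ j i ∧ g j i i j ≠ 0))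
  have hf1 : ∀ i j, ρ i j → i ≠ j → (f i ↔ g i j j i ≠ 0) := by
    intro i j hij hne
    constructor
    · rintro ⟨k, hk, ⟨h1, h2⟩ | ⟨h1, h2⟩⟩
      · exact hrow i k j h1 hij hk hne h2
      · exact hch1 k i j h1 hij hk.symm hne h2
    · intro h; exact ⟨j, hne, Or.inl ⟨hij, h⟩⟩
  have hf2 : ∀ i j, ρ i j → i ≠ j → (f j ↔ g i j j i ≠ 0) := by
    intro i j hij hne
    constructor
    · rintro ⟨k, hk, ⟨h1, h2⟩ | ⟨h1, h2⟩⟩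
      · exact hch2 i j k hij h1 hne hk h2
      · exact hcol j k i h1 hij hk.symm hne h2
    · intro h; exact ⟨i, hne.symm, Or.inr ⟨hij, h⟩⟩
  refine ⟨f, fun i j => if f i then g i j j i else g i j i j, ?_, ?_, ?_, ?_⟩
  · intro i j hij
    rcases eq_or_ne i j with rfl | hne
    · rfl
    · rw [hf1 i j hij hne, hf2 i j hij hne]
  · intro i; simp [hgd]
  · intro i j hij
    rcases eq_or_ne i j with rfl | hne
    · simp [hgd]
    · by_cases h : f i
      · simp only [if_pos h]; exact (hf1 i j hij hne).1 h
      · simp only [if_neg h]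
        exact (hnz i j hij hne).resolve_right (fun hh => h ((hf1 i j hij hne).2 hh))
  · intro i j hij
    rcases eq_or_ne i j with rfl | hne
    · simp [hgd, hd]
    refine ⟨fun h => ?_, fun h => ?_⟩
    · simp only [if_neg h]
      have hz : g i j j i = 0 := by by_contra hh; exact h ((hf1 i j hij hne).2 hh)
      change g i j = _
      ext a b
      rw [single_apply]
      split_ifs with h1
      · rw [h1.1, h1.2]
      · by_cases h2 : a = j ∧ b = i
        · rw [h2.1, h2.2, hz]
        · exact hsupp i j hij hne a b (by grind) h2
    · simp only [if_pos h]
      have hz : g i j i j = 0 :=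
        (mul_eq_zero.1 (hprod i j hij hne)).resolve_right ((hf1 i j hij hne).1 h)
      change g i j = _
      ext a b
      rw [single_apply]
      split_ifs with h1
      · rw [h1.1, h1.2]
      · by_cases h2 : a = i ∧ b = j
        · rw [h2.1, h2.2, hz]
        · exact hsupp i j hij hne a b h2 (by grind)

theorem aux_norm2 {n : ℕ} (ρ : Fin n → Fin n → Prop)
    (hρrefl : ∀ i, ρ i i) (hρtrans : ∀ i j k, ρ i j → ρ j k → ρ i k)
    (ψ : Matrix (Fin n) (Fin n) ℂ →ₗ[ℂ] Matrix (Fin n) (Fin n) ℂ)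
    (hd : ∀ i, ψ (single i i 1) = single i i 1)
    (hr : ∀ X : Matrix (Fin n) (Fin n) ℂ, (∀ i j, X i j ≠ 0 → ρ i j) → (ψ X).rank = X.rank) :
    ∃ p q : Fin n → ℂ, (∀ i, q i ≠ 0) ∧ (∀ i, p i * p i = p i) ∧ (∀ i j, ρ i j → p i = p j) ∧
      ∀ X : Matrix (Fin n) (Fin n) ℂ, (∀ i j, X i j ≠ 0 → ρ i j) →
        ψ X = diagonal q * (diagonal p * X + (1 - diagonal p) * Xᵀ) * diagonal (fun i => (q i)⁻¹) := by
  classical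
  obtain ⟨f, c, hf, hc1, hc0, hψ⟩ := aux_norm ρ hρrefl hρtrans ψ hd hr
  let p : Fin n → ℂ := fun i => if f i then 0 else 1
  have hpp : ∀ i, p i * p i = p i := by intro i; simp only [p]; split_ifs <;> simp
  have hpρ : ∀ i j, ρ i j → p i = p j := by intro i j h; simp only [p, hf i j h]
  have hcomm : ∀ Y : Matrix (Fin n) (Fin n) ℂ, (∀ i j, Y i j ≠ 0 → ρ i j) →
      Commute (diagonal p) Y := by
    intro Y hY
    change _ * _ = _ * _
    ext i j
    rw [diagonal_mul, mul_diagonal]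
    by_cases h : Y i j = 0
    · simp [h]
    · rw [hpρ i j (hY i j h), mul_comm]
  have hform : ∀ X : Matrix (Fin n) (Fin n) ℂ, (∀ i j, X i j ≠ 0 → ρ i j) →
      ψ X = diagonal p * (Matrix.of fun i j => c i j * X i j) +
        (1 - diagonal p) * (Matrix.of fun i j => c i j * X i j)ᵀ := by
    intro X hX
    set Y : Matrix (Fin n) (Fin n) ℂ := Matrix.of fun i j => c i j * X i j with hY
    have hYs : Y = ∑ i, ∑ j, single i j (Y i j) := matrix_eq_sum_single Y
    have hXs : X = ∑ i, ∑ j, X i j • single i j (1 : ℂ) := by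
      conv_lhs => rw [matrix_eq_sum_single X]
      simp
    conv_rhs => rw [hYs]
    conv_lhs => rw [hXs]
    simp only [map_sum, map_smul, transpose_sum, Finset.mul_sum, ← Finset.sum_add_distrib]
    refine Finset.sum_congr rfl fun i _ => Finset.sum_congr rfl fun j _ => ?_
    by_cases h0 : X i j = 0
    · simp [h0, hY]
    have hij := hX i j h0
    have h1 : (1 : Matrix (Fin n) (Fin n) ℂ) - diagonal p = diagonal (fun i => 1 - p i) := by
      rw [← diagonal_one, diagonal_sub]
    rw [h1]
    by_cases h : f i
    · have hj := (hf i j hij).1 h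
      rw [(hψ i j hij).2 h]
      ext a b
      simp only [Matrix.add_apply, diagonal_mul, Matrix.smul_apply, transpose_apply, single_apply,
        smul_eq_mul, hY, of_apply]
      by_cases e1 : i = a ∧ j = b <;> by_cases e2 : j = a ∧ i = b <;> grind
    · have hj : ¬ f j := fun hh => h ((hf i j hij).2 hh)
      rw [(hψ i j hij).1 h]
      ext a b
      simp only [Matrix.add_apply, diagonal_mul, Matrix.smul_apply, transpose_apply, single_apply,
        smul_eq_mul, hY, of_apply]
      by_cases e1 : i = a ∧ j = b <;> by_cases e2 : j = a ∧ i = b <;> grind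
  obtain ⟨r, s, hr0, hs0, hrs⟩ := aux_cocycle c (Finset.univ.filter fun x => ρ x.1 x.2)
    (fun x hx => hc0 _ _ (by simpa using hx)) (fun X hX => by
      have hX' : ∀ i j, X i j ≠ 0 → ρ i j := fun i j h => by simpa using hX i j h
      rw [← hr X hX', hform X hX', aux_ptrans p hpp]
      apply hcomm
      intro i j h
      apply hX'
      simp only [of_apply] at h
      exact right_ne_zero_of_mul h)
  have hrs' : ∀ i j, ρ i j → c i j = r i * s j := fun i j h => hrs (i, j) (by simpa using h)
  have hs : ∀ i, s i = (r i)⁻¹ := by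
    intro i
    have := hrs' i i (hρrefl i)
    rw [hc1] at this
    exact eq_inv_of_mul_eq_one_right this.symm
  refine ⟨p, fun i => if f i then (r i)⁻¹ else r i, ?_, hpp, hpρ, ?_⟩
  · intro i; dsimp only; split_ifs; exacts [inv_ne_zero (hr0 i), hr0 i]
  · intro X hX
    have h1 : (1 : Matrix (Fin n) (Fin n) ℂ) - diagonal p = diagonal (fun i => 1 - p i) := by
      rw [← diagonal_one, diagonal_sub]
    rw [hform X hX, h1]
    ext a b
    simp only [mul_diagonal, Matrix.add_apply, diagonal_mul, transpose_apply, of_apply]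
    by_cases h : f a
    · have e : p a = 0 := by simp [p, h]
      simp only [e, h, if_true]
      by_cases h0 : X b a = 0
      · simp [h0]
      · have hba := hX b a h0
        rw [hrs' b a hba, hs, if_pos ((hf b a hba).2 h), inv_inv]
        ring
    · have e : p a = 1 := by simp [p, h]
      simp only [e, h, if_false]
      by_cases h0 : X a b = 0
      · simp [h0]
      · have hba := hX a b h0
        rw [hrs' a b hba, hs, if_neg (fun hh => h ((hf a b hba).2 hh))]
        ring

theorem stmt_18 {n : ℕ} (ρ : Fin n → Fin n → Prop)
    (hρrefl : ∀ i, ρ i i) (hρtrans : ∀ i j k, ρ i j → ρ j k → ρ i k)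
    (Aρ : Set (Matrix (Fin n) (Fin n) ℂ))
    (hAρ : Aρ = {X | ∀ i j, X i j ≠ 0 → ρ i j})
    (φ : Matrix (Fin n) (Fin n) ℂ →ₗ[ℂ] Matrix (Fin n) (Fin n) ℂ)
    (hunital : φ 1 = 1) :
    (∀ X ∈ Aρ, (φ X).rank = X.rank) ↔
      ∃ T P : Matrix (Fin n) (Fin n) ℂ, IsUnit T ∧
        P ∈ Aρ ∧ P * P = P ∧ (∀ X ∈ Aρ, Commute P X) ∧
        ∀ X ∈ Aρ, φ X = T * (P * X + (1 - P) * Xᵀ) * T⁻¹ := by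
  classical
  subst hAρ
  simp only [Set.mem_ofPred_eq]
  have hE : ∀ i : Fin n, ∀ a b, (single i i 1 : Matrix (Fin n) (Fin n) ℂ) a b ≠ 0 → ρ a b := by
    intro i a b h
    by_contra hn
    apply h
    rw [single_apply, if_neg]
    rintro ⟨rfl, rfl⟩; exact hn (hρrefl _)
  constructor
  · intro h
    have hE1 : ∀ i, ∃ u v : Fin n → ℂ, φ (single i i 1) = vecMulVec u v := by
      intro i
      apply aux_rank_one
      rw [h _ (hE i)]
      have : (single i i 1 : Matrix (Fin n) (Fin n) ℂ) =
          vecMulVec (Pi.single i 1) (Pi.single i 1) := by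
        ext x y; simp [vecMulVec, single_apply, Pi.single_apply, eq_comm]; grind
      rw [this]
      exact rank_vecMulVec_le _ _
    choose u v huv using hE1
    let U : Matrix (Fin n) (Fin n) ℂ := Matrix.of fun a i => u i a
    let V : Matrix (Fin n) (Fin n) ℂ := Matrix.of fun i b => v i b
    have hUV : U * V = 1 := by
      rw [← hunital]
      have : (1 : Matrix (Fin n) (Fin n) ℂ) = ∑ i, single i i 1 := by
        rw [← diagonal_one, ← Matrix.sum_single_eq_diagonal]
      rw [this, map_sum]
      ext a b
      simp [huv, Matrix.sum_apply, vecMulVec_apply, U, V, mul_apply]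
    have hVU : V * U = 1 := mul_eq_one_comm.1 hUV
    have hUu : IsUnit U := IsUnit.of_mul_eq_one V hUV
    have hVu : IsUnit V := IsUnit.of_mul_eq_one U hVU
    let ψ : Matrix (Fin n) (Fin n) ℂ →ₗ[ℂ] Matrix (Fin n) (Fin n) ℂ :=
      (LinearMap.mulRight ℂ U).comp ((LinearMap.mulLeft ℂ V).comp φ)
    have hψ : ∀ X, ψ X = V * φ X * U := fun X => rfl
    obtain ⟨p, q, hq, hpp, hpρ, hform⟩ := aux_norm2 ρ hρrefl hρtrans ψ (by
      intro i
      rw [hψ, huv]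
      have : vecMulVec (u i) (v i) = U * single i i 1 * V := by
        ext a b
        simp [mul_apply, single_apply, vecMulVec_apply, U, V, ite_and]
      rw [this, ← mul_assoc, ← mul_assoc, hVU, one_mul, mul_assoc, hVU, mul_one]) (by
      intro X hX
      rw [hψ, rank_mul_eq_left_of_isUnit_det _ _ ((isUnit_iff_isUnit_det _).1 hUu),
        rank_mul_eq_right_of_isUnit_det _ _ ((isUnit_iff_isUnit_det _).1 hVu), h X hX])
    have hT : (U * diagonal q) * (diagonal (fun i => (q i)⁻¹) * V) = 1 := by
      have : diagonal q * diagonal (fun i => (q i)⁻¹) = 1 := by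
        rw [diagonal_mul_diagonal, ← diagonal_one]; congr 1; ext i; exact mul_inv_cancel₀ (hq i)
      rw [mul_assoc, ← mul_assoc (diagonal q), this, one_mul, hUV]
    refine ⟨U * diagonal q, diagonal p, IsUnit.of_mul_eq_one _ hT, ?_, ?_, ?_, ?_⟩
    · intro i j hij
      by_contra hn
      apply hij
      rw [diagonal_apply_ne]
      rintro rfl; exact hn (hρrefl _)
    · rw [diagonal_mul_diagonal]; congr 1; ext i; exact hpp i
    · intro Y hY
      change _ * _ = _ * _
      ext i j
      rw [diagonal_mul, mul_diagonal]
      by_cases h : Y i j = 0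
      · simp [h]
      · rw [hpρ i j (hY i j h), mul_comm]
    · intro X hX
      rw [Matrix.inv_eq_right_inv hT]
      have h1 : φ X = U * ψ X * V := by
        rw [hψ, ← mul_assoc, ← mul_assoc, hUV, one_mul, mul_assoc, hUV, mul_one]
      rw [h1, hform X hX]
      simp only [mul_assoc]
  · rintro ⟨T, P, hT, hP, hPP, hcomm, hform⟩ X hX
    have hdet := (isUnit_iff_isUnit_det _).1 hT
    have hPd : P = diagonal (fun i => P i i) := by
      ext i j
      rcases eq_or_ne i j with rfl | hne
      · simp
      · rw [diagonal_apply_ne _ hne]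
        have := congrFun (congrFun (hcomm _ (hE j)).eq i) j
        simpa [mul_apply, single_apply, ite_and, hne.symm] using this
    have hTi : IsUnit (T⁻¹).det := by rw [Matrix.isUnit_nonsing_inv_det_iff]; exact hdet
    rw [hform X hX, rank_mul_eq_left_of_isUnit_det _ _ hTi,
      rank_mul_eq_right_of_isUnit_det _ _ hdet]
    have hc := hcomm X hX
    rw [hPd] at hc hPP ⊢
    refine aux_ptrans _ ?_ X hc
    intro i
    have := congrFun (congrFun hPP i) i
    simpa using this
end
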